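/- Let G be a strongly connected Mauldin–Williams graph in ℝ^d satisfying the OSC, with the sets X_i having pairwise disjoint interiors, let (K_i)_{i∈V} be the associated graph-directed self-similar sets, let K = ⋃_{i∈V} K_i, and let s₀ = s₀(G). Then for every i ∈ V: the Hausdorff dimension of K_i equals s₀, the limit lim_{r↓0} log N_r(K_i)/log(1/r) exists and equals s₀ (and the same holds for K), and 0 < ℋ^{s₀}(K_i) < ∞, where ℋ^{s₀} is the s₀-dimensional Hausdorff measure. -/

import Mathlib

open Set Filter Topology MeasureTheory Metric

noncomputable section

/-- Points of `ℝ^d`. -/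
abbrev Pt (d : ℕ) := EuclideanSpace ℝ (Fin d)

/-- The `r`-covering number of `A ⊆ ℝ^d`: the least number of closed balls of
radius `r` needed to cover `A`. -/
noncomputable def coveringNumber {d : ℕ} (A : Set (Pt d)) (r : ℝ) : ℕ :=
  sInf {k : ℕ | ∃ c : Fin k → Pt d, A ⊆ ⋃ i, Metric.closedBall (c i) r}

/-- A Mauldin–Williams graph in `ℝ^d` over a finite directed multigraph with
vertex type `V` and edge type `E`: each vertex `i` carries a non-empty compact
set `X i` equal to the closure of its interior, and each edge `e` carries a
contractive similarity `S e` of ratio `r e ∈ (0,1)` mapping `X (term e)` into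
`X (init e)`. -/
structure MWGraph (d : ℕ) (V E : Type) [Fintype V] [Fintype E] where
  init : E → V
  term : E → V
  X : V → Set (Pt d)
  S : E → Pt d → Pt d
  r : E → ℝ
  X_nonempty : ∀ i, (X i).Nonempty
  X_compact : ∀ i, IsCompact (X i)
  X_regular : ∀ i, closure (interior (X i)) = X i
  r_pos : ∀ e, 0 < r e
  r_lt_one : ∀ e, r e < 1
  S_maps : ∀ e, Set.MapsTo (S e) (X (term e)) (X (init e))
  S_sim : ∀ e x y, dist (S e x) (S e y) = r e * dist x y

namespace MWGraph

variable {d : ℕ} {V E : Type} [Fintype V] [Fintype E]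

variable (G : MWGraph d V E)

/-- `G.IsPathFrom j γ` holds iff the list of edges `γ` is a directed path
starting at vertex `j`. -/
def IsPathFrom : V → List E → Prop
  | _, [] => True
  | j, e :: es => G.init e = j ∧ IsPathFrom (G.term e) es

/-- Terminal vertex of the path `γ` starting at `j`. -/
def pathTerm : V → List E → V
  | j, [] => j
  | _, e :: es => pathTerm (G.term e) es

/-- `S_γ = S_{e₁} ∘ ⋯ ∘ S_{eₙ}` (with `S_∅ = id`). -/
def pathMap : List E → Pt d → Pt d
  | [] => id
  | e :: es => G.S e ∘ pathMap es

/-- `r_γ = r_{e₁} ⋯ r_{eₙ}` (with `r_∅ = 1`). -/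
def pathRatio (γ : List E) : ℝ := (γ.map G.r).prod

/-- The underlying multigraph is strongly connected: for every ordered pair of
vertices there is a (non-empty) directed path from the first to the second. -/
def StronglyConnected : Prop :=
  ∀ i j : V, ∃ γ : List E, γ ≠ [] ∧ G.IsPathFrom i γ ∧ G.pathTerm i γ = j

/-- `K` is the list of graph-directed self-similar sets of `G`: the unique list
of non-empty compact sets with `K i = ⋃_{e ∈ E_i} S_e (K (term e))`. -/
def IsAttractor (K : V → Set (Pt d)) : Prop :=
  (∀ i, IsCompact (K i)) ∧ (∀ i, (K i).Nonempty) ∧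
    ∀ i, K i = ⋃ e ∈ {e : E | G.init e = i}, G.S e '' K (G.term e)

/-- `C` is an admissible list of condensation sets: compact subsets of the `X i`. -/
def IsCondensation (C : V → Set (Pt d)) : Prop :=
  ∀ i, IsCompact (C i) ∧ C i ⊆ G.X i

/-- `K` is the list of inhomogeneous graph-directed self-similar sets of `(G, C)`:
the unique list of non-empty compact sets with
`K i = ⋃_{e ∈ E_i} S_e (K (term e)) ∪ C i`. -/
def IsInhomAttractor (C : V → Set (Pt d)) (K : V → Set (Pt d)) : Prop :=
  (∀ i, IsCompact (K i)) ∧ (∀ i, (K i).Nonempty) ∧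
    ∀ i, K i = (⋃ e ∈ {e : E | G.init e = i}, G.S e '' K (G.term e)) ∪ C i

/-- `G` satisfies the open set condition with the open sets `U`. -/
def IsOSCWith (U : V → Set (Pt d)) : Prop :=
  (∀ i, (U i).Nonempty) ∧ (∀ i, IsOpen (U i)) ∧ (∀ i, Bornology.IsBounded (U i)) ∧
    (∀ i, U i ⊆ G.X i) ∧
    (∀ i, (⋃ e ∈ {e : E | G.init e = i}, G.S e '' U (G.term e)) ⊆ U i) ∧
    ∀ e e' : E, G.init e = G.init e' → e ≠ e' →
      Disjoint (G.S e '' U (G.term e)) (G.S e' '' U (G.term e'))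

/-- The set `{-log r_γ : γ a directed cycle of G}`. -/
def cycleSet : Set ℝ :=
  {x : ℝ | ∃ (j : V) (γ : List E), γ ≠ [] ∧ G.IsPathFrom j γ ∧ G.pathTerm j γ = j ∧
    x = -Real.log (G.pathRatio γ)}

/-- `G_M`, the smallest closed additive subgroup of `ℝ` containing
`{-log r_γ : γ a directed cycle}`. -/
def GM : Set ℝ := closure ((AddSubgroup.closure (G.cycleSet) : AddSubgroup ℝ) : Set ℝ)

variable [DecidableEq V]

/-- The matrix `A_G^s` with entries `(A_G^s)_{ij} = Σ_{e ∈ E_{ij}} r_e^s`. -/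
def Amatrix (s : ℝ) : Matrix V V ℝ :=
  Matrix.of fun i j => ∑ e : E, if G.init e = i ∧ G.term e = j then G.r e ^ s else 0

end MWGraph

/-- Spectral radius of a real square matrix: the largest modulus of a complex
eigenvalue. -/
noncomputable def matrixSpectralRadius {n : Type} [Fintype n] [DecidableEq n]
    (A : Matrix n n ℝ) : ℝ :=
  sSup {x : ℝ | ∃ μ : ℂ, μ ∈ spectrum ℂ (A.map (fun a : ℝ => (a : ℂ))) ∧ x = ‖μ‖}

/-- `s` is the (unique) exponent `s ≥ 0` with `ρ(A_G^s) = 1`, i.e. `s = s₀(G)`. -/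
def IsS0 {d : ℕ} {V E : Type} [Fintype V] [Fintype E] [DecidableEq V]
    (G : MWGraph d V E) (s : ℝ) : Prop :=
  0 ≤ s ∧ matrixSpectralRadius (G.Amatrix s) = 1

/-!
Let `s = s₀(G)`. Strong connectivity makes `A_G^s` irreducible, so Perron–Frobenius provides a
positive `v` with `A_G^s v = v`: the masses of natural measures on the `K i`, for which the piece
`S_e (K (term e))` of `K i` has mass `r_e ^ s * v (term e)`.

Upper bound: `r ^ (-s) * v i` satisfies with equality the recursive inequality
`N_r(K i) ≤ ∑ N_{r / r_e}(K (term e))`, so a comparison at scales of order one propagates to all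
small scales and `N_r(K i) = O(r ^ (-s))`.

Lower bound: the same propagation bounds the natural mass of a set `W` by a multiple of
`δ ^ (s - d)` times the volume of the `δ`-neighbourhood of `W` inside `U i`. Here the open set
condition enters, making the volumes of the copies of the `U j` add up. Balls of radius `r` thus
have mass `O(r ^ s)`, and the mass distribution principle bounds `μH[s] (K i)` and `N_r(K i)` from
below.
-/

section NonnegMatrix

open Matrix

attribute [local instance] Matrix.linftyOpNormedRing

lemma exists_gt_smul_le_of_forall_lt {n : Type*} [Finite n] [Nonempty n] {c : ℝ} {x z : n → ℝ}
    (hz : ∀ i, 0 < z i) (hlt : ∀ i, c * z i < x i) : ∃ c' > c, c' • z ≤ x := by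
  obtain ⟨i₀, hi₀⟩ := Finite.exists_min fun i => x i / z i
  exact ⟨x i₀ / z i₀, (lt_div_iff₀ (hz i₀)).2 (hlt i₀),
    fun i => (le_div_iff₀ (hz i)).1 (hi₀ i)⟩

variable {n : Type*} [Fintype n]

lemma mulVec_mono {A : Matrix n n ℝ} (hA : ∀ i j, 0 ≤ A i j) {x y : n → ℝ} (hxy : x ≤ y) :
    A *ᵥ x ≤ A *ᵥ y :=
  fun i => dotProduct_le_dotProduct_of_nonneg_left hxy (hA i)

lemma mulVec_pos_of_pos {B : Matrix n n ℝ} (hB : ∀ i j, 0 < B i j) {x : n → ℝ} (hx : 0 ≤ x)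
    (hx0 : x ≠ 0) (i : n) : 0 < (B *ᵥ x) i := by
  obtain ⟨j, hj⟩ := Function.ne_iff.1 hx0
  exact Finset.sum_pos' (fun l _ => mul_nonneg (hB i l).le (hx l))
    ⟨j, Finset.mem_univ j, mul_pos (hB i j) ((hx j).lt_of_ne' hj)⟩

lemma exists_commute_pos_of_isIrreducible {A : Matrix n n ℝ} (hA : A.IsIrreducible) :
    ∃ B, Commute A B ∧ ∀ i j, 0 < B i j := by
  classical
  choose k _ hk using (isIrreducible_iff_exists_pow_pos hA.nonneg).1 hA
  refine ⟨∑ p : n × n, A ^ k p.1 p.2,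
    Commute.sum_right _ _ _ fun p _ => (Commute.refl A).pow_right _, fun i j => ?_⟩
  rw [Matrix.sum_apply]
  exact Finset.sum_pos' (fun p _ => pow_apply_nonneg hA.nonneg _ i j)
    ⟨(i, j), Finset.mem_univ _, hk i j⟩

variable [DecidableEq n]

lemma linfty_opNorm_map_ofReal (A : Matrix n n ℝ) : ‖A.map Complex.ofReal‖ = ‖A‖ := by
  simp only [linfty_opNorm_def, map_apply, Complex.nnnorm_real]

lemma pow_smul_le_pow_mulVec {A : Matrix n n ℝ} (hA : ∀ i j, 0 ≤ A i j) {c : ℝ} (hc : 0 ≤ c)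
    {z : n → ℝ} (h : c • z ≤ A *ᵥ z) (k : ℕ) : c ^ k • z ≤ (A ^ k) *ᵥ z := by
  induction k with
  | zero => simp
  | succ k ih =>
    calc c ^ (k + 1) • z = c ^ k • (c • z) := by rw [smul_smul, pow_succ]
      _ ≤ c ^ k • (A *ᵥ z) := smul_le_smul_of_nonneg_left h (pow_nonneg hc k)
      _ = A *ᵥ (c ^ k • z) := (mulVec_smul _ _ _).symm
      _ ≤ A *ᵥ ((A ^ k) *ᵥ z) := mulVec_mono hA ih
      _ = (A ^ (k + 1)) *ᵥ z := by rw [mulVec_mulVec, pow_succ']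

lemma pow_le_linfty_opNorm_pow {A : Matrix n n ℝ} (hA : ∀ i j, 0 ≤ A i j) {c : ℝ} (hc : 0 ≤ c)
    {z : n → ℝ} (hz : 0 ≤ z) (hz0 : z ≠ 0) (h : c • z ≤ A *ᵥ z) (k : ℕ) : c ^ k ≤ ‖A ^ k‖ := by
  refine le_of_mul_le_mul_right ?_ (norm_pos_iff.2 hz0)
  calc c ^ k * ‖z‖ = ‖c ^ k • z‖ := by rw [norm_smul, Real.norm_of_nonneg (pow_nonneg hc k)]
    _ ≤ ‖(A ^ k) *ᵥ z‖ := by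
        refine (pi_norm_le_iff_of_nonneg (norm_nonneg _)).2 fun i => ?_
        have hi : 0 ≤ (c ^ k • z) i := mul_nonneg (pow_nonneg hc k) (hz i)
        rw [Real.norm_of_nonneg hi]
        exact ((pow_smul_le_pow_mulVec hA hc h k i).trans (Real.le_norm_self _)).trans
          (norm_le_pi_norm _ i)
    _ ≤ ‖A ^ k‖ * ‖z‖ := linfty_opNorm_mulVec _ _

end NonnegMatrix

section PerronFrobenius

open Matrix

attribute [local instance] Matrix.linftyOpNormedRing Matrix.linftyOpNormedAlgebra

variable {n : Type} [Fintype n] [DecidableEq n]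

lemma isGreatest_matrixSpectralRadius [Nonempty n] (A : Matrix n n ℝ) :
    IsGreatest (norm '' spectrum ℂ (A.map Complex.ofReal)) (matrixSpectralRadius A) := by
  have hfin : (norm '' spectrum ℂ (A.map Complex.ofReal)).Finite := (finite_spectrum _).image norm
  have hne : (norm '' spectrum ℂ (A.map Complex.ofReal)).Nonempty :=
    (spectrum.nonempty_of_isAlgClosed_of_finiteDimensional ℂ _).image norm
  have hρ : matrixSpectralRadius A = sSup (norm '' spectrum ℂ (A.map Complex.ofReal)) := by
    rw [matrixSpectralRadius]
    congr 1
    ext x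
    simp only [mem_image, mem_ofPred_eq, eq_comm]
  exact hρ ▸ ⟨hne.csSup_mem hfin, fun x hx => le_csSup hfin.bddAbove hx⟩

lemma nonempty_of_matrixSpectralRadius_ne_zero {A : Matrix n n ℝ}
    (hρ : matrixSpectralRadius A ≠ 0) : Nonempty n := by
  contrapose! hρ
  simp [matrixSpectralRadius, spectrum.of_subsingleton]

lemma matrixSpectralRadius_nonneg [Nonempty n] (A : Matrix n n ℝ) :
    0 ≤ matrixSpectralRadius A := by
  obtain ⟨μ, -, hμ⟩ := (isGreatest_matrixSpectralRadius A).1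
  exact hμ ▸ norm_nonneg μ

lemma spectralRadius_map_ofReal [Nonempty n] (A : Matrix n n ℝ) :
    spectralRadius ℂ (A.map Complex.ofReal) = ENNReal.ofReal (matrixSpectralRadius A) := by
  obtain ⟨⟨μ, hμ, hμρ⟩, hmax⟩ := isGreatest_matrixSpectralRadius A
  refine le_antisymm (iSup₂_le fun ν hν => ?_) ?_
  · rw [← enorm_eq_nnnorm, ← ofReal_norm]
    exact ENNReal.ofReal_le_ofReal (hmax (mem_image_of_mem norm hν))
  · rw [← hμρ, ofReal_norm]
    exact le_iSup₂_of_le μ hμ le_rfl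

-- The easy half of the Collatz–Wielandt formula, via Gelfand's formula.
lemma le_matrixSpectralRadius_of_smul_le_mulVec {A : Matrix n n ℝ}
    (hA : ∀ i j, 0 ≤ A i j) {c : ℝ} (hc : 0 ≤ c) {z : n → ℝ} (hz : 0 ≤ z) (hz0 : z ≠ 0)
    (h : c • z ≤ A *ᵥ z) : c ≤ matrixSpectralRadius A := by
  obtain ⟨i, -⟩ := Function.ne_iff.1 hz0
  have : Nonempty n := ⟨i⟩
  have hgelfand := spectrum.pow_norm_pow_one_div_tendsto_nhds_spectralRadius (A.map Complex.ofReal)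
  rw [spectralRadius_map_ofReal] at hgelfand
  refine (ENNReal.ofReal_le_ofReal_iff (matrixSpectralRadius_nonneg A)).1
    (ge_of_tendsto hgelfand ?_)
  filter_upwards [eventually_ne_atTop 0] with k hk
  refine ENNReal.ofReal_le_ofReal ?_
  have hmap : A.map Complex.ofReal ^ k = (A ^ k).map Complex.ofReal :=
    (Matrix.map_pow A Complex.ofRealHom k).symm
  rw [hmap, linfty_opNorm_map_ofReal, one_div, ← Real.pow_rpow_inv_natCast hc hk]
  exact Real.rpow_le_rpow (pow_nonneg hc k) (pow_le_linfty_opNorm_pow hA hc hz hz0 h k)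
    (by positivity)

lemma exists_matrixSpectralRadius_smul_le_mulVec [Nonempty n] {A : Matrix n n ℝ}
    (hA : ∀ i j, 0 ≤ A i j) : ∃ w, 0 ≤ w ∧ w ≠ 0 ∧ matrixSpectralRadius A • w ≤ A *ᵥ w := by
  obtain ⟨μ, hμ, hμρ⟩ := (isGreatest_matrixSpectralRadius A).1
  obtain ⟨u, hu0, hu⟩ : ∃ u ≠ 0, A.map Complex.ofReal *ᵥ u = μ • u := by
    rw [← spectrum_toLin', ← Module.End.hasEigenvalue_iff_mem_spectrum] at hμ
    obtain ⟨u, hu⟩ := hμ.exists_hasEigenvector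
    exact ⟨u, hu.2, by simpa only [toLin'_apply] using hu.apply_eq_smul⟩
  refine ⟨fun i => ‖u i‖, fun i => norm_nonneg _, ?_, fun i => ?_⟩
  · obtain ⟨j, hj⟩ := Function.ne_iff.1 hu0
    exact Function.ne_iff.2 ⟨j, norm_ne_zero_iff.2 hj⟩
  · calc matrixSpectralRadius A * ‖u i‖ = ‖(A.map Complex.ofReal *ᵥ u) i‖ := by
          rw [hu, Pi.smul_apply, norm_smul, hμρ]
      _ ≤ ∑ j, ‖(A i j : ℂ) * u j‖ := norm_sum_le _ _
      _ = ∑ j, A i j * ‖u j‖ := Finset.sum_congr rfl fun j _ => by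
          rw [norm_mul, Complex.norm_of_nonneg (hA i j)]

-- Were the inequality strict somewhere, a positive matrix commuting with `A` would make it strict
-- everywhere, contradicting the Collatz–Wielandt bound.
lemma mulVec_eq_of_matrixSpectralRadius_smul_le {A : Matrix n n ℝ} (hA : A.IsIrreducible)
    {w : n → ℝ} (hw : 0 ≤ w) (hle : matrixSpectralRadius A • w ≤ A *ᵥ w) :
    A *ᵥ w = matrixSpectralRadius A • w := by
  rcases eq_or_ne w 0 with rfl | hw0
  · simp
  obtain ⟨i, -⟩ := Function.ne_iff.1 hw0
  have : Nonempty n := ⟨i⟩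
  obtain ⟨B, hcomm, hB⟩ := exists_commute_pos_of_isIrreducible hA
  have hz : ∀ i, 0 < (B *ᵥ w) i := mulVec_pos_of_pos hB hw hw0
  by_contra hne
  have hgap : ∀ i, matrixSpectralRadius A * (B *ᵥ w) i < (A *ᵥ (B *ᵥ w)) i := by
    intro i
    have hpos := mulVec_pos_of_pos hB (sub_nonneg.2 hle) (sub_ne_zero.2 hne) i
    rw [mulVec_sub, mulVec_mulVec, ← hcomm.eq, ← mulVec_mulVec, mulVec_smul] at hpos
    exact sub_pos.1 hpos
  obtain ⟨c, hc, hcz⟩ := exists_gt_smul_le_of_forall_lt hz hgap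
  exact hc.not_ge (le_matrixSpectralRadius_of_smul_le_mulVec hA.nonneg
    ((matrixSpectralRadius_nonneg A).trans hc.le) (fun i => (hz i).le)
    (Function.ne_iff.2 ⟨i, (hz i).ne'⟩) hcz)

theorem exists_pos_mulVec_eq_matrixSpectralRadius_smul [Nonempty n] {A : Matrix n n ℝ}
    (hA : A.IsIrreducible) : ∃ v, (∀ i, 0 < v i) ∧ A *ᵥ v = matrixSpectralRadius A • v := by
  obtain ⟨w, hw, hw0, hle⟩ := exists_matrixSpectralRadius_smul_le_mulVec hA.nonneg
  obtain ⟨B, hcomm, hB⟩ := exists_commute_pos_of_isIrreducible hA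
  refine ⟨B *ᵥ w, mulVec_pos_of_pos hB hw hw0, ?_⟩
  rw [mulVec_mulVec, hcomm.eq, ← mulVec_mulVec, mulVec_eq_of_matrixSpectralRadius_smul_le hA hw hle,
    mulVec_smul]

end PerronFrobenius

section GrowthRate

open Asymptotics

lemma tendsto_log_one_div_nhdsGT_zero :
    Tendsto (fun r : ℝ => Real.log (1 / r)) (𝓝[>] 0) atTop := by
  simp only [one_div]
  exact Real.tendsto_log_atTop.comp tendsto_inv_nhdsGT_zero

lemma log_sub_log_isBigO_one_of_isTheta {α : Type*} {l : Filter α} {f g : α → ℝ} (h : f =Θ[l] g)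
    (hg : ∀ᶠ x in l, g x ≠ 0) :
    (fun x => Real.log (f x) - Real.log (g x)) =O[l] fun _ => (1 : ℝ) := by
  obtain ⟨C, hC, hupper⟩ := h.1.exists_pos
  obtain ⟨c, hc, hlower⟩ := h.2.exists_pos
  rw [isBigO_one_iff]
  refine ⟨max (Real.log C) (Real.log c), eventually_map.2 ?_⟩
  filter_upwards [hg, hupper.bound, hlower.bound] with x hgx hu hl
  have hg0 : 0 < |g x| := abs_pos.2 hgx
  have hf0 : 0 < |f x| := pos_of_mul_pos_right (hg0.trans_le hl) hc.le
  have hu' := Real.log_le_log hf0 hu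
  have hl' := Real.log_le_log hg0 hl
  simp only [Real.norm_eq_abs] at hu' hl'
  rw [Real.log_mul hC.ne' hg0.ne', Real.log_abs, Real.log_abs] at hu'
  rw [Real.log_mul hc.ne' hf0.ne', Real.log_abs, Real.log_abs] at hl'
  rw [Real.norm_eq_abs, abs_le]
  constructor <;> linarith [le_max_left (Real.log C) (Real.log c),
    le_max_right (Real.log C) (Real.log c)]

lemma tendsto_log_div_log_one_div_of_isTheta {f : ℝ → ℝ} {s : ℝ}
    (h : f =Θ[𝓝[>] 0] fun r => r ^ (-s)) :
    Tendsto (fun r => Real.log (f r) / Real.log (1 / r)) (𝓝[>] 0) (𝓝 s) := by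
  have hpos : ∀ᶠ r : ℝ in 𝓝[>] 0, 0 < r := self_mem_nhdsWithin
  have hbdd := log_sub_log_isBigO_one_of_isTheta h
    (hpos.mono fun r hr => (Real.rpow_pos_of_pos hr _).ne')
  have herr : Tendsto (fun r => (Real.log (f r) - Real.log (r ^ (-s))) / Real.log (1 / r))
      (𝓝[>] 0) (𝓝 0) :=
    (hbdd.trans_isLittleO <| (isLittleO_one_left_iff ℝ).2
      (tendsto_norm_atTop_atTop.comp tendsto_log_one_div_nhdsGT_zero)).tendsto_div_nhds_zero
  rw [← zero_add s]
  refine (herr.add_const s).congr' ?_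
  filter_upwards [hpos, tendsto_log_one_div_nhdsGT_zero.eventually_gt_atTop 0] with r hr hlog
  rw [div_add' _ _ _ hlog.ne', Real.log_rpow hr, one_div, Real.log_inv]
  ring_nf

end GrowthRate

section CoveringNumber

open Asymptotics Bornology

variable {d : ℕ} {A B : Set (Pt d)} {r : ℝ}

lemma coveringNumber_le_card {ι : Type*} [Fintype ι] {c : ι → Pt d}
    (h : A ⊆ ⋃ i, closedBall (c i) r) : coveringNumber A r ≤ Fintype.card ι := by
  refine Nat.sInf_le ⟨c ∘ (Fintype.equivFin ι).symm, ?_⟩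
  exact h.trans_eq ((Fintype.equivFin ι).symm.surjective.iUnion_comp _).symm

lemma coveringNumber_le_one {x : Pt d} (h : A ⊆ closedBall x r) : coveringNumber A r ≤ 1 :=
  coveringNumber_le_card (c := fun _ : Unit => x) (h.trans (subset_iUnion_of_subset () subset_rfl))

lemma exists_cover_coveringNumber (hA : IsBounded A) (hr : 0 < r) :
    ∃ c : Fin (coveringNumber A r) → Pt d, A ⊆ ⋃ k, closedBall (c k) r := by
  obtain ⟨t, ht, hcov⟩ := Metric.totallyBounded_iff.1
    (hA.isCompact_closure.totallyBounded.subset subset_closure) r hr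
  have := ht.fintype
  refine Nat.sInf_mem (s := {k : ℕ | ∃ c : Fin k → Pt d, A ⊆ ⋃ i, closedBall (c i) r})
    ⟨Fintype.card t, fun k => (Fintype.equivFin t).symm k, ?_⟩
  rw [(Fintype.equivFin t).symm.surjective.iUnion_comp fun y => closedBall (y : Pt d) r]
  rw [biUnion_eq_iUnion] at hcov
  exact hcov.trans (iUnion_mono fun y => ball_subset_closedBall)

lemma coveringNumber_biUnion_le {ι : Type*} {t : Finset ι} {A : ι → Set (Pt d)}
    (hA : ∀ i ∈ t, IsBounded (A i)) (hr : 0 < r) :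
    coveringNumber (⋃ i ∈ t, A i) r ≤ ∑ i ∈ t, coveringNumber (A i) r := by
  choose c hc using fun i : t => exists_cover_coveringNumber (hA i i.2) hr
  have hcov : ⋃ i ∈ t, A i ⊆ ⋃ p : Σ i : t, Fin (coveringNumber (A i) r),
      closedBall (c p.1 p.2) r := by
    rw [iUnion_sigma]
    exact iUnion₂_subset fun i hi => subset_iUnion_of_subset ⟨i, hi⟩ (hc ⟨i, hi⟩)
  refine (coveringNumber_le_card hcov).trans_eq ?_
  simp only [Fintype.card_sigma, Fintype.card_fin]
  exact t.sum_coe_sort fun i => coveringNumber (A i) r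

lemma coveringNumber_image_le {L : NNReal} {f : Pt d → Pt d} (hf : LipschitzWith L f)
    (hA : IsBounded A) (hr : 0 < r) : coveringNumber (f '' A) (L * r) ≤ coveringNumber A r := by
  obtain ⟨c, hc⟩ := exists_cover_coveringNumber hA hr
  have hcov : f '' A ⊆ ⋃ k, closedBall (f (c k)) (L * r) := by
    refine (image_mono hc).trans ?_
    rw [image_iUnion]
    exact iUnion_mono fun k => (hf.mapsTo_closedBall (c k) r).image_subset
  simpa only [Fintype.card_fin] using coveringNumber_le_card hcov

lemma coveringNumber_iUnion_isBigO {ι : Type*} [Finite ι] {A : ι → Set (Pt d)} {g : ℝ → ℝ}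
    (hA : ∀ i, IsBounded (A i))
    (hN : ∀ i, (fun r => (coveringNumber (A i) r : ℝ)) =O[𝓝[>] 0] g) :
    (fun r => (coveringNumber (⋃ i, A i) r : ℝ)) =O[𝓝[>] 0] g := by
  have := Fintype.ofFinite ι
  refine IsBigO.trans (.of_bound' ?_) (IsBigO.sum (s := Finset.univ) fun i _ => hN i)
  filter_upwards [self_mem_nhdsWithin] with r (hr : 0 < r)
  have h := coveringNumber_biUnion_le (t := Finset.univ) (fun i _ => hA i) hr
  simp only [Finset.mem_univ, iUnion_true] at h
  rw [Finset.sum_apply, Real.norm_natCast, ← Nat.cast_sum, Real.norm_natCast]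
  exact Nat.cast_le.2 h

lemma hausdorffMeasure_lt_top_of_coveringNumber_isBigO {s : ℝ} (hA : IsBounded A) (hs : 0 ≤ s)
    (hN : (fun r => (coveringNumber A r : ℝ)) =O[𝓝[>] 0] fun r => r ^ (-s)) :
    μH[s] A < ⊤ := by
  obtain ⟨C, hC⟩ := hN.bound
  have hpos : ∀ᶠ r : ℝ in 𝓝[>] 0, 0 < r := self_mem_nhdsWithin
  choose! c hc using fun r (hr : 0 < r) => exists_cover_coveringNumber hA hr
  have hdiam : ∀ r : ℝ, 0 < r → ∀ k, ediam (closedBall (c r k) r) ≤ ENNReal.ofReal (2 * r) := by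
    intro r hr k
    rw [ENNReal.ofReal_mul zero_le_two, ENNReal.ofReal_ofNat, ← Metric.closedEBall_ofReal hr.le]
    exact Metric.ediam_closedEBall_le
  have hlim : Tendsto (fun r : ℝ => ENNReal.ofReal (2 * r)) (𝓝[>] 0) (𝓝 0) := by
    rw [← ENNReal.ofReal_zero]
    refine ENNReal.tendsto_ofReal (tendsto_nhdsWithin_of_tendsto_nhds ?_)
    simpa only [mul_zero] using (continuous_const_mul (2 : ℝ)).tendsto 0
  refine (Measure.hausdorffMeasure_le_liminf_sum s A _ hlim
    (fun r k => closedBall (c r k) r) (hpos.mono hdiam) (hpos.mono hc)).trans_lt ?_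
  refine (liminf_le_of_frequently_le' (Eventually.frequently ?_)).trans_lt
    (ENNReal.ofReal_lt_top (r := C * 2 ^ s))
  filter_upwards [hpos, hC] with r hr hCr
  rw [Real.norm_natCast, Real.norm_of_nonneg (Real.rpow_nonneg hr.le _)] at hCr
  calc ∑ k, ediam (closedBall (c r k) r) ^ s
      ≤ ∑ _k : Fin (coveringNumber A r), ENNReal.ofReal (2 * r) ^ s :=
        Finset.sum_le_sum fun k _ => ENNReal.rpow_le_rpow (hdiam r hr k) hs
    _ = ENNReal.ofReal (coveringNumber A r * (2 * r) ^ s) := by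
        rw [Finset.sum_const, Finset.card_univ, Fintype.card_fin, nsmul_eq_mul,
          ENNReal.ofReal_mul (Nat.cast_nonneg _), ENNReal.ofReal_natCast,
          ENNReal.ofReal_rpow_of_pos (by positivity)]
    _ ≤ ENNReal.ofReal (C * r ^ (-s) * (2 * r) ^ s) := by gcongr
    _ = ENNReal.ofReal (C * 2 ^ s) := by
        rw [Real.mul_rpow zero_le_two hr.le, Real.rpow_neg hr.le]
        congr 1
        have := (Real.rpow_pos_of_pos hr s).ne'
        field_simp

end CoveringNumber

section MassDistribution

open Asymptotics Bornology
open scoped ENNReal NNReal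

lemma exists_outerMeasure_le_isOpen_ge_isCompact {X : Type*} [TopologicalSpace X]
    {m : Set X → ℝ≥0∞} (hempty : m ∅ = 0) (hmono : Monotone m)
    (hunion : ∀ U W, m (U ∪ W) ≤ m U + m W) :
    ∃ μ : OuterMeasure X, (∀ U, IsOpen U → μ U ≤ m U) ∧ ∀ K, IsCompact K → m K ≤ μ K := by
  refine ⟨inducedOuterMeasure (fun U (_ : IsOpen U) => m U) isOpen_empty hempty, fun U hU => ?_,
    fun K hK => ?_⟩
  · exact (OuterMeasure.ofFunction_le U).trans_eq (extend_eq _ hU)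
  rw [inducedOuterMeasure,
    OuterMeasure.ofFunction_eq_iInf_mem _ _ fun U hU => extend_eq_top _ hU]
  refine le_iInf₂ fun U hU => le_iInf fun hKU => ?_
  obtain ⟨t, ht⟩ := hK.elim_finite_subcover U hU hKU
  calc m K ≤ m (⋃ k ∈ t, U k) := hmono ht
    _ ≤ ∑ k ∈ t, m (U k) := t.apply_union_le_sum hempty (hunion _ _)
    _ ≤ ∑' k, m (U k) := ENNReal.sum_le_tsum t
    _ = ∑' k, extend (fun U (_ : IsOpen U) => m U) (U k) :=
        tsum_congr fun k => (extend_eq (fun U (_ : IsOpen U) => m U) (hU k)).symm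

/-- The Frostman condition `μ (B(x, r)) = O(r ^ s)`, uniformly in `x`, for an outer measure `μ`. -/
def IsFrostman {X : Type*} [PseudoMetricSpace X] (μ : OuterMeasure X) (s : ℝ) : Prop :=
  ∃ C : ℝ≥0, ∀ᶠ r in 𝓝[>] (0 : ℝ), ∀ x, μ (ball x r) ≤ C * ENNReal.ofReal r ^ s

lemma IsFrostman.exists_le_mul_ediam_rpow {X : Type*} [PseudoMetricSpace X] {μ : OuterMeasure X}
    {s : ℝ} (hμ : IsFrostman μ s) :
    ∃ C : ℝ≥0, ∃ ε > 0, ∀ A : Set X, ediam A ≤ ε → A.Nonempty → μ A ≤ C * ediam A ^ s := by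
  obtain ⟨C, hC⟩ := hμ
  obtain ⟨R, hR : 0 < R, hCR⟩ := mem_nhdsGT_iff_exists_Ioo_subset.1 hC
  refine ⟨C, ENNReal.ofReal (R / 2), ENNReal.ofReal_pos.2 (half_pos hR), fun A hA ⟨x, hx⟩ => ?_⟩
  have hlt : ediam A < ENNReal.ofReal R :=
    hA.trans_lt ((ENNReal.ofReal_lt_ofReal_iff hR).2 (half_lt_self hR))
  have hball : ∀ᶠ ρ in 𝓝[>] ediam A, μ A ≤ C * ρ ^ s := by
    filter_upwards [Ioo_mem_nhdsGT hlt] with ρ ⟨hdiam, hρR⟩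
    have hρ : ENNReal.ofReal ρ.toReal = ρ := ENNReal.ofReal_toReal hρR.ne_top
    have hρ0 : 0 < ρ.toReal := ENNReal.toReal_pos (pos_of_gt hdiam).ne' hρR.ne_top
    have hsub : A ⊆ ball x ρ.toReal := fun y hy => by
      rw [mem_ball, ← edist_lt_ofReal, hρ]
      exact (edist_le_ediam_of_mem hy hx).trans_lt hdiam
    calc μ A ≤ μ (ball x ρ.toReal) := measure_mono hsub
      _ ≤ C * ρ ^ s := by
        rw [← hρ] at hρR
        simpa only [hρ] using hCR ⟨hρ0, (ENNReal.ofReal_lt_ofReal_iff hR).1 hρR⟩ x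
  have : (𝓝[>] ediam A).NeBot := nhdsGT_neBot_of_exists_gt ⟨_, hlt⟩
  exact ge_of_tendsto ((ENNReal.Tendsto.const_mul (ENNReal.continuous_rpow_const.tendsto _)
    (.inr ENNReal.coe_ne_top)).mono_left nhdsWithin_le_nhds) hball

lemma IsFrostman.hausdorffMeasure_pos {X : Type*} [MetricSpace X] [MeasurableSpace X]
    [BorelSpace X] {μ : OuterMeasure X} {s : ℝ} (hμ : IsFrostman μ s) {A : Set X} (hA : μ A ≠ 0) :
    0 < μH[s] A := by
  obtain ⟨C, ε, hε, hC⟩ := hμ.exists_le_mul_ediam_rpow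
  have hle : μ ≤ OuterMeasure.mkMetric fun ρ => C * ρ ^ s := by
    refine OuterMeasure.le_mkMetric _ μ ε hε fun B hB => ?_
    rcases B.eq_empty_or_nonempty with rfl | hne
    · simp
    · exact hC B hB hne
  have hsmul : OuterMeasure.mkMetric (fun ρ => C * ρ ^ s) ≤
      ((C + 1 : ℝ≥0) : ℝ≥0∞) • OuterMeasure.mkMetric (X := X) fun ρ => ρ ^ s := by
    refine OuterMeasure.mkMetric_mono_smul ENNReal.coe_ne_top (by simp) (.of_forall fun ρ => ?_)
    exact mul_le_mul_left (ENNReal.coe_le_coe.2 (by simp)) _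
  have hpos : 0 < (C + 1 : ℝ≥0) * μH[s] A := (pos_iff_ne_zero.2 hA).trans_le <| by
    have := (hle.trans hsmul) A
    rwa [smul_apply, OuterMeasure.coe_mkMetric] at this
  exact pos_of_mul_pos_right hpos zero_le

lemma IsFrostman.rpow_neg_isBigO_coveringNumber {d : ℕ} {μ : OuterMeasure (Pt d)} {s : ℝ}
    (hμ : IsFrostman μ s) {A : Set (Pt d)} (hA : IsBounded A) (hμA : μ A ≠ 0) :
    (fun r : ℝ => r ^ (-s)) =O[𝓝[>] 0] fun r => (coveringNumber A r : ℝ) := by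
  obtain ⟨C, hC⟩ := hμ
  obtain ⟨ε, hε, hεA⟩ := ENNReal.lt_iff_exists_nnreal_btwn.1 (pos_iff_ne_zero.2 hμA)
  have hε0 : 0 < (ε : ℝ) := ENNReal.coe_pos.1 hε
  refine IsBigO.of_bound (C * 2 ^ s / ε) ?_
  filter_upwards [eventually_nhdsGT_zero_mul_left zero_lt_two hC, self_mem_nhdsWithin]
    with r hCr (hr : 0 < r)
  obtain ⟨c, hc⟩ := exists_cover_coveringNumber hA hr
  have hmass : (ε : ℝ≥0∞) ≤ ENNReal.ofReal (coveringNumber A r * (C * (2 * r) ^ s)) :=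
    calc (ε : ℝ≥0∞) ≤ μ (⋃ k, ball (c k) (2 * r)) := hεA.le.trans <| measure_mono <|
          hc.trans (iUnion_mono fun k => closedBall_subset_ball (by linarith))
      _ ≤ ∑ k, μ (ball (c k) (2 * r)) := measure_iUnion_fintype_le _ _
      _ ≤ ∑ _k : Fin (coveringNumber A r), C * ENNReal.ofReal (2 * r) ^ s :=
          Finset.sum_le_sum fun k _ => hCr (c k)
      _ = ENNReal.ofReal (coveringNumber A r * (C * (2 * r) ^ s)) := by
          rw [Finset.sum_const, Finset.card_univ, Fintype.card_fin, nsmul_eq_mul,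
            ENNReal.ofReal_mul (Nat.cast_nonneg _), ENNReal.ofReal_natCast,
            ENNReal.ofReal_mul C.coe_nonneg, ENNReal.ofReal_coe_nnreal,
            ENNReal.ofReal_rpow_of_pos (by positivity)]
  have hreal : (ε : ℝ) ≤ coveringNumber A r * (C * (2 * r) ^ s) :=
    (ENNReal.ofReal_le_ofReal_iff (by positivity)).1 (by rwa [ENNReal.ofReal_coe_nnreal])
  have hrs : 0 < r ^ s := Real.rpow_pos_of_pos hr s
  rw [Real.mul_rpow zero_le_two hr.le] at hreal
  rw [Real.norm_natCast, Real.norm_of_nonneg (Real.rpow_nonneg hr.le _), Real.rpow_neg hr.le,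
    inv_le_iff_one_le_mul₀ hrs, div_mul_eq_mul_div, div_mul_eq_mul_div, one_le_div hε0]
  linarith

lemma IsFrostman.tendsto_log_coveringNumber_div {d : ℕ} {μ : OuterMeasure (Pt d)} {s : ℝ}
    (hμ : IsFrostman μ s) {A : Set (Pt d)} (hA : IsBounded A) (hμA : μ A ≠ 0)
    (hN : (fun r => (coveringNumber A r : ℝ)) =O[𝓝[>] 0] fun r => r ^ (-s)) :
    Tendsto (fun r => Real.log (coveringNumber A r) / Real.log (1 / r)) (𝓝[>] 0) (𝓝 s) :=
  tendsto_log_div_log_one_div_of_isTheta ⟨hN, hμ.rpow_neg_isBigO_coveringNumber hA hμA⟩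

lemma dimH_eq_ofReal_of_hausdorffMeasure_pos_lt_top {X : Type*} [MetricSpace X]
    [MeasurableSpace X] [BorelSpace X] {s : ℝ} (hs : 0 ≤ s) {A : Set X} (hpos : 0 < μH[s] A)
    (hfin : μH[s] A < ⊤) : dimH A = ENNReal.ofReal s := by
  rw [← Real.coe_toNNReal s hs] at hpos hfin
  exact dimH_of_hausdorffMeasure_ne_zero_ne_top hpos.ne' hfin.ne

end MassDistribution

section UniformBounds

lemma exists_forall_le_mul {ι : Type*} [Finite ι] (u : ι → ℝ) {v : ι → ℝ} (hv : ∀ i, 0 < v i) :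
    ∃ C, ∀ i, u i ≤ C * v i := by
  obtain ⟨C, hC⟩ := Finite.bddAbove_range fun i => u i / v i
  exact ⟨C, fun i => (div_le_iff₀ (hv i)).1 (hC (mem_range_self i))⟩

lemma exists_pos_forall_dist_lt_of_isBounded {ι X : Type*} [Finite ι] [PseudoMetricSpace X]
    {A : ι → Set X} (hA : ∀ i, Bornology.IsBounded (A i)) :
    ∃ D > 0, ∀ i, ∀ x ∈ A i, ∀ y ∈ A i, dist x y < D := by
  obtain ⟨C, hC⟩ := Metric.isBounded_iff.1 (Bornology.isBounded_iUnion.2 hA)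
  refine ⟨max C 0 + 1, by positivity, fun i x hx y hy => ?_⟩
  have := hC (mem_iUnion_of_mem i hx) (mem_iUnion_of_mem i hy)
  exact (this.trans (le_max_left C 0)).trans_lt (lt_add_one _)

lemma exists_forall_rpow_le_of_mem_Icc {D : ℝ} (hD : 0 < D) (R t : ℝ) :
    ∃ B, ∀ r ∈ Icc D R, r ^ t ≤ B := by
  obtain ⟨B, hB⟩ := (isCompact_Icc (a := D) (b := R)).bddAbove_image
    (f := fun r : ℝ => r ^ t) <| continuousOn_id.rpow_const fun r hr =>
      .inl (hD.trans_le hr.1).ne'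
  exact ⟨B, fun r hr => hB (mem_image_of_mem _ hr)⟩

end UniformBounds

instance isAddHaarMeasure_hausdorffMeasure_pt (d : ℕ) :
    (μH[(d : ℝ)] : Measure (Pt d)).IsAddHaarMeasure := by
  simpa using isAddHaarMeasure_hausdorffMeasure (E := Pt d)

namespace MWGraph

open Asymptotics Bornology
open scoped ENNReal NNReal

variable {d : ℕ} {V E : Type} [Fintype V] [Fintype E]

section Similarities

variable (G : MWGraph d V E)

lemma lipschitzWith_S (e : E) : LipschitzWith (G.r e).toNNReal (G.S e) :=
  .of_dist_le_mul fun x y => by rw [G.S_sim, Real.coe_toNNReal _ (G.r_pos e).le]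

lemma antilipschitzWith_S (e : E) : AntilipschitzWith (G.r e)⁻¹.toNNReal (G.S e) :=
  .of_le_mul_dist fun x y => by
    rw [G.S_sim, Real.coe_toNNReal _ (inv_nonneg.2 (G.r_pos e).le),
      inv_mul_cancel_left₀ (G.r_pos e).ne']

lemma measurableEmbedding_S (e : E) : MeasurableEmbedding (G.S e) :=
  ((G.antilipschitzWith_S e).isClosedEmbedding
    (G.lipschitzWith_S e).uniformContinuous).measurableEmbedding

lemma rpow_mul_hausdorffMeasure_le_image (e : E) {t : ℝ} (ht : 0 ≤ t) (A : Set (Pt d)) :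
    ENNReal.ofReal (G.r e ^ t) * μH[t] A ≤ μH[t] (G.S e '' A) := by
  have hr := G.r_pos e
  calc ENNReal.ofReal (G.r e ^ t) * μH[t] A
      ≤ ENNReal.ofReal (G.r e ^ t) *
          (((G.r e)⁻¹.toNNReal : ℝ≥0∞) ^ t * μH[t] (G.S e '' A)) :=
        mul_le_mul_right ((G.antilipschitzWith_S e).le_hausdorffMeasure_image ht A) _
    _ = ENNReal.ofReal (G.r e ^ t) * ENNReal.ofReal ((G.r e)⁻¹ ^ t) * μH[t] (G.S e '' A) := by
        rw [mul_assoc, ← ENNReal.ofReal_rpow_of_pos (inv_pos.2 hr)]; rfl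
    _ = μH[t] (G.S e '' A) := by
        rw [← ENNReal.ofReal_mul (by positivity), ← Real.mul_rpow hr.le (inv_pos.2 hr).le,
          mul_inv_cancel₀ hr.ne', Real.one_rpow, ENNReal.ofReal_one, one_mul]

lemma image_S_inter_thickening_preimage_subset (e : E) (A W : Set (Pt d)) (δ : ℝ) :
    G.S e '' (A ∩ thickening (δ / G.r e) (G.S e ⁻¹' W)) ⊆ G.S e '' A ∩ thickening δ W := by
  rintro _ ⟨x, ⟨hxA, hxW⟩, rfl⟩
  obtain ⟨y, hyW, hxy⟩ := mem_thickening_iff.1 hxW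
  refine ⟨mem_image_of_mem _ hxA, mem_thickening_iff.2 ⟨G.S e y, hyW, ?_⟩⟩
  rwa [G.S_sim, mul_comm, ← lt_div_iff₀ (G.r_pos e)]

end Similarities

lemma IsAttractor.isBounded {G : MWGraph d V E} {K : V → Set (Pt d)} (hK : G.IsAttractor K)
    (i : V) : IsBounded (K i) :=
  (hK.1 i).isBounded

section OutEdges

variable [DecidableEq V] {G : MWGraph d V E} {K : V → Set (Pt d)}

variable (G) in
/-- The set `E_i` of edges with initial vertex `i`, as a `Finset` so that one can sum over it. -/
def outEdges (i : V) : Finset E := {e | G.init e = i}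

@[simp]
lemma mem_outEdges {e : E} {i : V} : e ∈ G.outEdges i ↔ G.init e = i := by
  simp only [outEdges, Finset.mem_filter_univ]

lemma IsAttractor.eq_biUnion_outEdges (hK : G.IsAttractor K) (i : V) :
    K i = ⋃ e ∈ G.outEdges i, G.S e '' K (G.term e) := by
  simpa only [mem_ofPred_eq, mem_outEdges] using hK.2.2 i

lemma IsAttractor.mapsTo (hK : G.IsAttractor K) {e : E} {i : V} (he : e ∈ G.outEdges i) :
    MapsTo (G.S e) (K (G.term e)) (K i) := by
  rw [hK.eq_biUnion_outEdges i]
  exact fun x hx => mem_biUnion he (mem_image_of_mem _ hx)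

lemma IsOSCWith.image_subset {U : V → Set (Pt d)} (hU : G.IsOSCWith U) {e : E} {i : V}
    (he : e ∈ G.outEdges i) : G.S e '' U (G.term e) ⊆ U i :=
  fun _ hx => hU.2.2.2.2.1 i (mem_biUnion (mem_outEdges.1 he) hx)

lemma IsOSCWith.pairwiseDisjoint {U : V → Set (Pt d)} (hU : G.IsOSCWith U) (i : V) :
    (G.outEdges i : Set E).PairwiseDisjoint fun e => G.S e '' U (G.term e) :=
  fun e he e' he' => hU.2.2.2.2.2 e e' <| by
    rw [mem_outEdges.1 he, mem_outEdges.1 he']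

end OutEdges

section ScaleInduction

variable (G : MWGraph d V E)

lemma exists_ratio_bounds :
    ∃ a > 0, ∃ b, 0 < b ∧ b < 1 ∧ ∀ e, a ≤ G.r e ∧ G.r e ≤ b := by
  rcases isEmpty_or_nonempty E with hE | hE
  · exact ⟨1, one_pos, 1 / 2, one_half_pos, one_half_lt_one, fun e => hE.elim e⟩
  · obtain ⟨e₀, he₀⟩ := Finite.exists_min G.r
    obtain ⟨e₁, he₁⟩ := Finite.exists_max G.r
    exact ⟨G.r e₀, G.r_pos _, G.r e₁, G.r_pos _, G.r_lt_one _, fun e => ⟨he₀ e, he₁ e⟩⟩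

-- Passing to an edge magnifies scales by a factor bounded away from `1` and from `∞`, so finitely
-- many steps take any small scale into the compact window `[D, R]`.
lemma exists_scale_induction [DecidableEq V] {D : ℝ} (hD : 0 < D) :
    ∃ R, D < R ∧ ∀ P : V → ℝ → Prop, (∀ i, ∀ r ∈ Icc D R, P i r) →
      (∀ i, ∀ r ∈ Ioo 0 D, (∀ e ∈ G.outEdges i, P (G.term e) (r / G.r e)) → P i r) →
      ∀ i, ∀ r ∈ Ioo 0 R, P i r := by
  obtain ⟨a, ha, b, hb, hb1, hab⟩ := G.exists_ratio_bounds
  have hR : D < max (D / a) (D + 1) := lt_max_of_lt_right (lt_add_one D)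
  refine ⟨max (D / a) (D + 1), hR, fun P hbase hstep i r hr => ?_⟩
  have hP : ∀ n i r, r ∈ Ioc 0 (max (D / a) (D + 1)) → D * b ^ n ≤ r → P i r := by
    intro n
    induction n with
    | zero => exact fun i r hr hDr => hbase i r ⟨by simpa using hDr, hr.2⟩
    | succ n ih =>
      intro i r hr hDr
      rcases le_or_gt D r with hD' | hD'
      · exact hbase i r ⟨hD', hr.2⟩
      refine hstep i r ⟨hr.1, hD'⟩ fun e _ => ih _ _ ⟨div_pos hr.1 (G.r_pos e), ?_⟩ ?_
      · exact (div_le_div₀ hD.le hD'.le ha (hab e).1).trans (le_max_left _ _)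
      · rw [le_div_iff₀ (G.r_pos e)]
        calc D * b ^ n * G.r e ≤ D * b ^ n * b := by gcongr; exact (hab e).2
          _ = D * b ^ (n + 1) := by ring
          _ ≤ r := hDr
  obtain ⟨n, hn⟩ := exists_pow_lt_of_lt_one (div_pos hr.1 hD) hb1
  exact hP n i r ⟨hr.1, hr.2.le⟩ ((lt_div_iff₀' hD).1 hn).le

end ScaleInduction

section HarmonicWeight

variable [DecidableEq V] {G : MWGraph d V E} {s : ℝ} {v : V → ℝ}

variable (G) in
lemma Amatrix_nonneg (s : ℝ) (i j : V) : 0 ≤ G.Amatrix s i j :=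
  Finset.sum_nonneg fun e _ => ite_nonneg (Real.rpow_nonneg (G.r_pos e).le s) le_rfl

variable (G) in
lemma Amatrix_pos (s : ℝ) (e : E) : 0 < G.Amatrix s (G.init e) (G.term e) := by
  refine Finset.sum_pos'
    (fun e _ => ite_nonneg (Real.rpow_nonneg (G.r_pos e).le s) le_rfl) ⟨e, Finset.mem_univ _, ?_⟩
  rw [if_pos ⟨rfl, rfl⟩]
  exact Real.rpow_pos_of_pos (G.r_pos e) s

lemma Amatrix_pow_length_pos (s : ℝ) {γ : List E} {i : V} (hγ : G.IsPathFrom i γ) :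
    0 < (G.Amatrix s ^ γ.length) i (G.pathTerm i γ) := by
  induction γ generalizing i with
  | nil => simp [pathTerm]
  | cons e es ih =>
    obtain ⟨rfl, hes⟩ := hγ
    rw [List.length_cons, pow_succ', Matrix.mul_apply]
    exact Finset.sum_pos' (fun l _ => mul_nonneg (G.Amatrix_nonneg s _ l)
        (Matrix.pow_apply_nonneg (G.Amatrix_nonneg s) _ _ _))
      ⟨G.term e, Finset.mem_univ _, mul_pos (G.Amatrix_pos s e) (ih hes)⟩

lemma StronglyConnected.isIrreducible_Amatrix (hG : G.StronglyConnected) (s : ℝ) :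
    (G.Amatrix s).IsIrreducible := by
  refine (Matrix.isIrreducible_iff_exists_pow_pos (G.Amatrix_nonneg s)).2 fun i j => ?_
  obtain ⟨γ, hne, hγ, rfl⟩ := hG i j
  exact ⟨_, List.length_pos_iff.2 hne, Amatrix_pow_length_pos s hγ⟩

variable (G) in
lemma Amatrix_mulVec_apply (s : ℝ) (v : V → ℝ) (i : V) :
    (G.Amatrix s).mulVec v i = ∑ e ∈ G.outEdges i, G.r e ^ s * v (G.term e) := by
  simp only [Matrix.mulVec, dotProduct, Amatrix, Matrix.of_apply, Finset.sum_mul]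
  rw [Finset.sum_comm, outEdges, Finset.sum_filter]
  refine Finset.sum_congr rfl fun e _ => ?_
  by_cases h : G.init e = i <;> simp [h]

variable (G) in
/-- A positive fixed vector of `A_G^s`: the total masses `v i` of the natural self-similar
measures, for which the piece `S_e (K (term e))` of `K i` has mass `r_e ^ s * v (term e)`. -/
structure IsHarmonicWeight (s : ℝ) (v : V → ℝ) : Prop where
  pos : ∀ i, 0 < v i
  sum_eq : ∀ i, ∑ e ∈ G.outEdges i, G.r e ^ s * v (G.term e) = v i

lemma StronglyConnected.exists_isHarmonicWeight [Nonempty V] (hG : G.StronglyConnected)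
    (hs : matrixSpectralRadius (G.Amatrix s) = 1) : ∃ v, G.IsHarmonicWeight s v := by
  obtain ⟨v, hv, hAv⟩ := exists_pos_mulVec_eq_matrixSpectralRadius_smul (hG.isIrreducible_Amatrix s)
  refine ⟨v, hv, fun i => ?_⟩
  rw [← G.Amatrix_mulVec_apply, hAv, hs, one_smul]

lemma IsHarmonicWeight.sum_ofReal_eq (hv : G.IsHarmonicWeight s v) (i : V) :
    ∑ e ∈ G.outEdges i, ENNReal.ofReal (G.r e ^ s) * ENNReal.ofReal (v (G.term e)) =
      ENNReal.ofReal (v i) := by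
  have hr : ∀ e, 0 ≤ G.r e ^ s := fun e => Real.rpow_nonneg (G.r_pos e).le s
  simp_rw [← hv.sum_eq i, ← ENNReal.ofReal_mul (hr _)]
  exact (ENNReal.ofReal_sum_of_nonneg fun e _ => mul_nonneg (hr e) (hv.pos _).le).symm

end HarmonicWeight

section CoveringNumberBound

variable [DecidableEq V] {G : MWGraph d V E} {K : V → Set (Pt d)} {s : ℝ} {v : V → ℝ}

lemma IsAttractor.coveringNumber_le_sum (hK : G.IsAttractor K) (i : V) {r : ℝ} (hr : 0 < r) :
    coveringNumber (K i) r ≤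
      ∑ e ∈ G.outEdges i, coveringNumber (K (G.term e)) (r / G.r e) := by
  calc coveringNumber (K i) r
      = coveringNumber (⋃ e ∈ G.outEdges i, G.S e '' K (G.term e)) r := by
        rw [← hK.eq_biUnion_outEdges]
    _ ≤ ∑ e ∈ G.outEdges i, coveringNumber (G.S e '' K (G.term e)) r :=
        coveringNumber_biUnion_le
          (fun e _ => (G.lipschitzWith_S e).isBounded_image (hK.isBounded _)) hr
    _ ≤ ∑ e ∈ G.outEdges i, coveringNumber (K (G.term e)) (r / G.r e) := by
        refine Finset.sum_le_sum fun e _ => ?_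
        have h := coveringNumber_image_le (G.lipschitzWith_S e) (hK.isBounded (G.term e))
          (div_pos hr (G.r_pos e))
        rwa [Real.coe_toNNReal _ (G.r_pos e).le, mul_div_cancel₀ _ (G.r_pos e).ne'] at h

lemma IsAttractor.exists_coveringNumber_le (hK : G.IsAttractor K) (hv : G.IsHarmonicWeight s v) :
    ∃ C, ∃ R > 0, ∀ i, ∀ r ∈ Ioo 0 R, (coveringNumber (K i) r : ℝ) ≤ C * r ^ (-s) * v i := by
  obtain ⟨D, hD, hdist⟩ := exists_pos_forall_dist_lt_of_isBounded hK.isBounded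
  obtain ⟨R, hDR, hind⟩ := G.exists_scale_induction hD
  obtain ⟨B, hB⟩ := exists_forall_rpow_le_of_mem_Icc hD R s
  obtain ⟨C, hC⟩ := exists_forall_le_mul (fun _ => B) hv.pos
  refine ⟨C, R, hD.trans hDR, hind _ (fun i r hr => ?_) fun i r hr ih => ?_⟩
  · have hr0 : 0 < r := hD.trans_le hr.1
    obtain ⟨x, hx⟩ := hK.2.1 i
    have hone : coveringNumber (K i) r ≤ 1 :=
      coveringNumber_le_one fun y hy => ((hdist i y hy x hx).le.trans hr.1)
    refine (Nat.cast_le_one.2 hone).trans ?_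
    rw [mul_right_comm, Real.rpow_neg hr0.le, ← div_eq_mul_inv,
      one_le_div (Real.rpow_pos_of_pos hr0 s)]
    exact (hB r hr).trans (hC i)
  · calc (coveringNumber (K i) r : ℝ)
        ≤ ∑ e ∈ G.outEdges i, (coveringNumber (K (G.term e)) (r / G.r e) : ℝ) :=
          mod_cast hK.coveringNumber_le_sum i hr.1
      _ ≤ ∑ e ∈ G.outEdges i, C * (r / G.r e) ^ (-s) * v (G.term e) := Finset.sum_le_sum ih
      _ = ∑ e ∈ G.outEdges i, C * r ^ (-s) * (G.r e ^ s * v (G.term e)) :=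
          Finset.sum_congr rfl fun e _ => by
            rw [Real.div_rpow hr.1.le (G.r_pos e).le, Real.rpow_neg (G.r_pos e).le, div_inv_eq_mul]
            ring
      _ = C * r ^ (-s) * v i := by rw [← Finset.mul_sum, hv.sum_eq]

lemma IsAttractor.coveringNumber_isBigO (hK : G.IsAttractor K) (hv : G.IsHarmonicWeight s v)
    (i : V) :
    (fun r => (coveringNumber (K i) r : ℝ)) =O[𝓝[>] 0] fun r => r ^ (-s) := by
  obtain ⟨C, R, hR, hbound⟩ := hK.exists_coveringNumber_le hv
  refine IsBigO.of_bound (C * v i) ?_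
  filter_upwards [Ioo_mem_nhdsGT hR] with r hr
  rw [Real.norm_natCast, Real.norm_of_nonneg (Real.rpow_nonneg hr.1.le _), mul_right_comm]
  exact hbound i r hr

end CoveringNumberBound

section NaturalContent

variable [DecidableEq V] {G : MWGraph d V E} {K : V → Set (Pt d)} {s : ℝ} {v : V → ℝ}
  {i : V} {W : Set (Pt d)}

variable (G) in
/-- The total mass of the `n`-th level pieces `S_γ (K j)` of `K i` that meet `W`, where such a
piece has mass `r_γ ^ s * v j`. -/
def hitMass (s : ℝ) (v : V → ℝ) (K : V → Set (Pt d)) : ℕ → V → Set (Pt d) → ℝ≥0∞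
  | 0, i, W => ⨆ _ : (K i ∩ W).Nonempty, ENNReal.ofReal (v i)
  | n + 1, i, W => ∑ e ∈ G.outEdges i,
      ENNReal.ofReal (G.r e ^ s) * hitMass s v K n (G.term e) (G.S e ⁻¹' W)

lemma hitMass_mono (n : ℕ) (i : V) : Monotone (G.hitMass s v K n i) := by
  induction n generalizing i with
  | zero =>
    exact fun W W' h => iSup_mono' fun hW => ⟨hW.mono (inter_subset_inter_right _ h), le_rfl⟩
  | succ n ih =>
    exact fun W W' h => Finset.sum_le_sum fun e _ => mul_le_mul_right (ih _ (preimage_mono h)) _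

lemma hitMass_union_le (n : ℕ) (i : V) (W W' : Set (Pt d)) :
    G.hitMass s v K n i (W ∪ W') ≤ G.hitMass s v K n i W + G.hitMass s v K n i W' := by
  induction n generalizing i W W' with
  | zero =>
    refine iSup_le fun h => ?_
    rw [inter_union_distrib_left, union_nonempty] at h
    rcases h with h | h
    · exact le_add_right (le_iSup_of_le h le_rfl)
    · exact le_add_left (le_iSup_of_le h le_rfl)
  | succ n ih =>
    simp only [hitMass, preimage_union, ← Finset.sum_add_distrib, ← mul_add]
    exact Finset.sum_le_sum fun e _ => mul_le_mul_right (ih _ _ _) _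

lemma IsAttractor.antitone_hitMass (hK : G.IsAttractor K) (hv : G.IsHarmonicWeight s v) (i : V)
    (W : Set (Pt d)) : Antitone fun n => G.hitMass s v K n i W := by
  refine antitone_nat_of_succ_le fun n => ?_
  induction n generalizing i W with
  | zero =>
    by_cases h : (K i ∩ W).Nonempty
    · rw [hitMass, hitMass, iSup_pos h, ← hv.sum_ofReal_eq i]
      exact Finset.sum_le_sum fun e _ => mul_le_mul_right (iSup_le fun _ => le_rfl) _
    · refine (Finset.sum_eq_zero fun e he => ?_).trans_le zero_le
      have : ¬ (K (G.term e) ∩ G.S e ⁻¹' W).Nonempty :=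
        fun ⟨x, hx, hxW⟩ => h ⟨G.S e x, hK.mapsTo he hx, hxW⟩
      rw [hitMass, iSup_neg this, bot_eq_zero, mul_zero]
  | succ n ih => exact Finset.sum_le_sum fun e _ => mul_le_mul_right (ih _ _) _

lemma IsAttractor.hitMass_eq_of_subset (hK : G.IsAttractor K) (hv : G.IsHarmonicWeight s v)
    (n : ℕ) (hW : K i ⊆ W) : G.hitMass s v K n i W = ENNReal.ofReal (v i) := by
  induction n generalizing i W with
  | zero =>
    rw [hitMass, iSup_pos]
    rw [inter_eq_self_of_subset_left hW]
    exact hK.2.1 i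
  | succ n ih =>
    rw [hitMass, ← hv.sum_ofReal_eq i]
    exact Finset.sum_congr rfl fun e he => by
      rw [ih (W := G.S e ⁻¹' W) fun x hx => hW (hK.mapsTo he hx)]

variable (G) in
/-- The limit of `hitMass` as the level tends to infinity: a subadditive set function standing in
for the natural measure on `K i`, whose self-similarity it shares. -/
def naturalContent (s : ℝ) (v : V → ℝ) (K : V → Set (Pt d)) (i : V) (W : Set (Pt d)) : ℝ≥0∞ :=
  ⨅ n, G.hitMass s v K n i W

lemma naturalContent_mono (i : V) : Monotone (G.naturalContent s v K i) :=
  fun _ _ h => iInf_mono fun n => hitMass_mono n i h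

lemma naturalContent_le (i : V) (W : Set (Pt d)) :
    G.naturalContent s v K i W ≤ ENNReal.ofReal (v i) :=
  iInf_le_of_le 0 (iSup_le fun _ => le_rfl)

lemma naturalContent_eq_zero (h : ¬ (K i ∩ W).Nonempty) : G.naturalContent s v K i W = 0 :=
  nonpos_iff_eq_zero.1 (iInf_le_of_le 0 (iSup_le fun h' => (h h').elim))

lemma IsAttractor.naturalContent_union_le (hK : G.IsAttractor K) (hv : G.IsHarmonicWeight s v)
    (i : V) (W W' : Set (Pt d)) :
    G.naturalContent s v K i (W ∪ W') ≤
      G.naturalContent s v K i W + G.naturalContent s v K i W' := by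
  simp only [naturalContent]
  have hanti := hK.antitone_hitMass hv i
  rw [ENNReal.iInf_add_iInf fun m n =>
    ⟨max m n, add_le_add (hanti W (le_max_left m n)) (hanti W' (le_max_right m n))⟩]
  exact iInf_mono fun n => hitMass_union_le n i W W'

lemma IsAttractor.naturalContent_self (hK : G.IsAttractor K) (hv : G.IsHarmonicWeight s v)
    (i : V) : G.naturalContent s v K i (K i) = ENNReal.ofReal (v i) := by
  simp only [naturalContent, hK.hitMass_eq_of_subset hv _ subset_rfl, iInf_const]

lemma IsAttractor.naturalContent_le_sum (hK : G.IsAttractor K) (hv : G.IsHarmonicWeight s v)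
    (i : V) (W : Set (Pt d)) :
    G.naturalContent s v K i W ≤ ∑ e ∈ G.outEdges i,
      ENNReal.ofReal (G.r e ^ s) * G.naturalContent s v K (G.term e) (G.S e ⁻¹' W) := by
  have hr : ∀ e, ENNReal.ofReal (G.r e ^ s) ≠ 0 := fun e =>
    (ENNReal.ofReal_pos.2 (Real.rpow_pos_of_pos (G.r_pos e) s)).ne'
  simp only [naturalContent, ENNReal.mul_iInf_of_ne (hr _) ENNReal.ofReal_ne_top]
  rw [← ENNReal.iInf_sum fun t m n => ⟨max m n, fun e _ => ⟨?_, ?_⟩⟩]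
  · exact le_iInf fun n => iInf_le (fun n => G.hitMass s v K n i W) (n + 1)
  · exact mul_le_mul_right (hK.antitone_hitMass hv _ _ (le_max_left m n)) _
  · exact mul_le_mul_right (hK.antitone_hitMass hv _ _ (le_max_right m n)) _

end NaturalContent

section VolumeBound

variable [DecidableEq V] {G : MWGraph d V E} {K U : V → Set (Pt d)} {s : ℝ} {v : V → ℝ}

lemma IsOSCWith.sum_hausdorffMeasure_le (hU : G.IsOSCWith U) {t : ℝ} (ht : 0 ≤ t) (i : V)
    (W : Set (Pt d)) (δ : ℝ) :
    ∑ e ∈ G.outEdges i, ENNReal.ofReal (G.r e ^ t) *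
        μH[t] (U (G.term e) ∩ thickening (δ / G.r e) (G.S e ⁻¹' W)) ≤
      μH[t] (U i ∩ thickening δ W) := by
  let A : E → Set (Pt d) := fun e => U (G.term e) ∩ thickening (δ / G.r e) (G.S e ⁻¹' W)
  have hmeas : ∀ e, MeasurableSet (G.S e '' A e) := fun e =>
    (G.measurableEmbedding_S e).measurableSet_image.2
      ((hU.2.1 _).inter isOpen_thickening).measurableSet
  have hdisj : (G.outEdges i : Set E).PairwiseDisjoint fun e => G.S e '' A e :=
    (hU.pairwiseDisjoint i).mono fun e => image_mono inter_subset_left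
  calc ∑ e ∈ G.outEdges i, ENNReal.ofReal (G.r e ^ t) * μH[t] (A e)
      ≤ ∑ e ∈ G.outEdges i, μH[t] (G.S e '' A e) :=
        Finset.sum_le_sum fun e _ => G.rpow_mul_hausdorffMeasure_le_image e ht (A e)
    _ = μH[t] (⋃ e ∈ G.outEdges i, G.S e '' A e) :=
        (measure_biUnion_finset hdisj fun e _ => hmeas e).symm
    _ ≤ μH[t] (U i ∩ thickening δ W) := measure_mono <| iUnion₂_subset fun e he =>
        (G.image_S_inter_thickening_preimage_subset e _ W δ).trans
          (inter_subset_inter_left _ (hU.image_subset he))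

lemma IsOSCWith.exists_naturalContent_le_of_mem_Icc (hU : G.IsOSCWith U)
    (hv : G.IsHarmonicWeight s v) {D : ℝ} (hD : 0 < D) (R : ℝ)
    (hdist : ∀ i, ∀ x ∈ U i, ∀ y ∈ K i, dist x y < D) :
    ∃ C : ℝ, ∀ i, ∀ δ ∈ Icc D R, ∀ W, G.naturalContent s v K i W ≤
      ENNReal.ofReal (δ ^ (s - d) * C) * μH[(d : ℝ)] (U i ∩ thickening δ W) := by
  obtain ⟨B, hB⟩ := exists_forall_rpow_le_of_mem_Icc hD R (d - s)
  have hfin : ∀ i, μH[(d : ℝ)] (U i) ≠ ⊤ := fun i => (hU.2.2.1 i).measure_lt_top.ne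
  obtain ⟨C, hC⟩ := exists_forall_le_mul (fun i => v i * B)
    fun i => ENNReal.toReal_pos ((hU.2.1 i).measure_pos μH[(d : ℝ)] (hU.1 i)).ne' (hfin i)
  refine ⟨C, fun i δ hδ W => ?_⟩
  have hδ0 : 0 < δ := hD.trans_le hδ.1
  by_cases hW : (K i ∩ W).Nonempty
  swap
  · exact (naturalContent_eq_zero hW).trans_le zero_le
  obtain ⟨y, hyK, hyW⟩ := hW
  have hsub : U i ⊆ thickening δ W := fun x hx =>
    mem_thickening_iff.2 ⟨y, hyW, (hdist i x hx y hyK).trans_le hδ.1⟩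
  have hvB : v i ≤ δ ^ (s - d) * (v i * B) :=
    calc v i = δ ^ (s - d) * (v i * δ ^ (d - s)) := by
          rw [mul_left_comm, ← Real.rpow_add hδ0, sub_add_sub_cancel, sub_self, Real.rpow_zero,
            mul_one]
      _ ≤ δ ^ (s - d) * (v i * B) := by
          gcongr
          exacts [(hv.pos i).le, hB δ hδ]
  calc G.naturalContent s v K i W ≤ ENNReal.ofReal (v i) := naturalContent_le i W
    _ ≤ ENNReal.ofReal (δ ^ (s - d) * C * (μH[(d : ℝ)] (U i)).toReal) := by
        refine ENNReal.ofReal_le_ofReal (hvB.trans ?_)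
        rw [mul_assoc]
        exact mul_le_mul_of_nonneg_left (hC i) (Real.rpow_nonneg hδ0.le _)
    _ = ENNReal.ofReal (δ ^ (s - d) * C) * μH[(d : ℝ)] (U i ∩ thickening δ W) := by
        rw [inter_eq_self_of_subset_left hsub, ENNReal.ofReal_mul' ENNReal.toReal_nonneg,
          ENNReal.ofReal_toReal (hfin i)]

lemma IsOSCWith.exists_naturalContent_le_hausdorffMeasure (hU : G.IsOSCWith U)
    (hK : G.IsAttractor K) (hv : G.IsHarmonicWeight s v) :
    ∃ C : ℝ, ∃ R > 0, ∀ i, ∀ δ ∈ Ioo 0 R, ∀ W, G.naturalContent s v K i W ≤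
      ENNReal.ofReal (δ ^ (s - d) * C) * μH[(d : ℝ)] (U i ∩ thickening δ W) := by
  obtain ⟨D, hD, hdist⟩ := exists_pos_forall_dist_lt_of_isBounded
    fun i => (hU.2.2.1 i).union (hK.isBounded i)
  obtain ⟨R, hDR, hind⟩ := G.exists_scale_induction hD
  obtain ⟨C, hC⟩ := hU.exists_naturalContent_le_of_mem_Icc hv hD R
    fun i x hx y hy => hdist i x (.inl hx) y (.inr hy)
  refine ⟨C, R, hD.trans hDR, hind _ hC fun i δ hδ ih W => ?_⟩
  have hscale : ∀ e, ENNReal.ofReal (G.r e ^ s) * ENNReal.ofReal ((δ / G.r e) ^ (s - d) * C) =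
      ENNReal.ofReal (δ ^ (s - d) * C) * ENNReal.ofReal (G.r e ^ (d : ℝ)) := fun e => by
    have hr := G.r_pos e
    rw [← ENNReal.ofReal_mul (by positivity), ← ENNReal.ofReal_mul' (by positivity),
      Real.div_rpow hδ.1.le hr.le, Real.rpow_sub hr s]
    congr 1
    field_simp
  calc G.naturalContent s v K i W
      ≤ ∑ e ∈ G.outEdges i, ENNReal.ofReal (G.r e ^ s) *
          G.naturalContent s v K (G.term e) (G.S e ⁻¹' W) := hK.naturalContent_le_sum hv i W
    _ ≤ ∑ e ∈ G.outEdges i, ENNReal.ofReal (G.r e ^ s) *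
          (ENNReal.ofReal ((δ / G.r e) ^ (s - d) * C) *
            μH[(d : ℝ)] (U (G.term e) ∩ thickening (δ / G.r e) (G.S e ⁻¹' W))) :=
        Finset.sum_le_sum fun e he => mul_le_mul_right (ih e he _) _
    _ = ENNReal.ofReal (δ ^ (s - d) * C) * ∑ e ∈ G.outEdges i, ENNReal.ofReal (G.r e ^ (d : ℝ)) *
          μH[(d : ℝ)] (U (G.term e) ∩ thickening (δ / G.r e) (G.S e ⁻¹' W)) := by
        rw [Finset.mul_sum]
        exact Finset.sum_congr rfl fun e _ => by rw [← mul_assoc, hscale e, mul_assoc]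
    _ ≤ _ := mul_le_mul_right (hU.sum_hausdorffMeasure_le d.cast_nonneg i W δ) _

lemma IsOSCWith.exists_naturalContent_ball_le (hU : G.IsOSCWith U) (hK : G.IsAttractor K)
    (hv : G.IsHarmonicWeight s v) :
    ∃ C : ℝ≥0, ∀ i, ∀ᶠ r in 𝓝[>] (0 : ℝ), ∀ x,
      G.naturalContent s v K i (ball x r) ≤ C * ENNReal.ofReal r ^ s := by
  obtain ⟨C, R, hR, hC⟩ := hU.exists_naturalContent_le_hausdorffMeasure hK hv
  have hfin : ENNReal.ofReal (2 ^ d * C) * μH[(d : ℝ)] (ball (0 : Pt d) 1) ≠ ⊤ :=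
    ENNReal.mul_ne_top ENNReal.ofReal_ne_top measure_ball_lt_top.ne
  refine ⟨(ENNReal.ofReal (2 ^ d * C) * μH[(d : ℝ)] (ball (0 : Pt d) 1)).toNNReal, fun i => ?_⟩
  filter_upwards [Ioo_mem_nhdsGT hR] with r hr x
  have hr0 := hr.1
  calc G.naturalContent s v K i (ball x r)
      ≤ ENNReal.ofReal (r ^ (s - d) * C) * μH[(d : ℝ)] (U i ∩ thickening r (ball x r)) :=
        hC i r hr _
    _ ≤ ENNReal.ofReal (r ^ (s - d) * C) * μH[(d : ℝ)] (ball x (2 * r)) := by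
        gcongr
        rw [two_mul]
        exact inter_subset_right.trans (thickening_ball x r r)
    _ = ENNReal.ofReal (2 ^ d * C) * μH[(d : ℝ)] (ball (0 : Pt d) 1) * ENNReal.ofReal r ^ s := by
        rw [Measure.addHaar_ball_of_pos _ _ (by positivity), finrank_euclideanSpace_fin,
          ENNReal.ofReal_rpow_of_pos hr0, mul_right_comm, ← mul_assoc,
          ← ENNReal.ofReal_mul' (by positivity), ← ENNReal.ofReal_mul' (by positivity),
          Real.rpow_sub hr0, Real.rpow_natCast]
        congr 2
        field_simp
        ring
    _ = _ := by rw [ENNReal.coe_toNNReal hfin]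

lemma IsOSCWith.exists_isFrostman (hU : G.IsOSCWith U) (hK : G.IsAttractor K)
    (hv : G.IsHarmonicWeight s v) (i : V) :
    ∃ μ : OuterMeasure (Pt d), IsFrostman μ s ∧ μ (K i) ≠ 0 := by
  obtain ⟨μ, hopen, hcompact⟩ := exists_outerMeasure_le_isOpen_ge_isCompact
    (m := G.naturalContent s v K i) (naturalContent_eq_zero (by simp)) (naturalContent_mono i)
    (hK.naturalContent_union_le hv i)
  obtain ⟨C, hC⟩ := hU.exists_naturalContent_ball_le hK hv
  refine ⟨μ, ⟨C, (hC i).mono fun r hr x => (hopen _ isOpen_ball).trans (hr x)⟩, ?_⟩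
  have hmass : 0 < ENNReal.ofReal (v i) := ENNReal.ofReal_pos.2 (hv.pos i)
  exact (hmass.trans_le ((hK.naturalContent_self hv i).symm.trans_le (hcompact _ (hK.1 i)))).ne'

end VolumeBound

end MWGraph

theorem stmt18_general {d : ℕ} {V E : Type} [Fintype V] [Fintype E] [DecidableEq V]
    (G : MWGraph d V E) (hSC : G.StronglyConnected)
    (K U : V → Set (Pt d)) (hK : G.IsAttractor K) (hU : G.IsOSCWith U)
    (s0 : ℝ) (hs0 : IsS0 G s0) :
    (∀ i : V,
      dimH (K i) = ENNReal.ofReal s0 ∧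
      Tendsto (fun r : ℝ => Real.log (coveringNumber (K i) r : ℝ) / Real.log (1 / r))
        (𝓝[>] (0 : ℝ)) (𝓝 s0) ∧
      0 < μH[s0] (K i) ∧ μH[s0] (K i) < ⊤) ∧
    dimH (⋃ i : V, K i) = ENNReal.ofReal s0 ∧
    Tendsto (fun r : ℝ => Real.log (coveringNumber (⋃ i : V, K i) r : ℝ) / Real.log (1 / r))
      (𝓝[>] (0 : ℝ)) (𝓝 s0) := by
  obtain ⟨hs, hρ⟩ := hs0
  have : Nonempty V := nonempty_of_matrixSpectralRadius_ne_zero (hρ.trans_ne one_ne_zero)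
  obtain ⟨v, hv⟩ := hSC.exists_isHarmonicWeight hρ
  have hupper := hK.coveringNumber_isBigO hv
  choose μ hμ hμK using hU.exists_isFrostman hK hv
  have hpos : ∀ i, 0 < μH[s0] (K i) := fun i => (hμ i).hausdorffMeasure_pos (hμK i)
  have hfin : ∀ i, μH[s0] (K i) < ⊤ := fun i =>
    hausdorffMeasure_lt_top_of_coveringNumber_isBigO (hK.isBounded i) hs (hupper i)
  have hdim : ∀ i, dimH (K i) = ENNReal.ofReal s0 := fun i =>
    dimH_eq_ofReal_of_hausdorffMeasure_pos_lt_top hs (hpos i) (hfin i)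
  refine ⟨fun i => ⟨hdim i, (hμ i).tendsto_log_coveringNumber_div (hK.isBounded i) (hμK i)
    (hupper i), hpos i, hfin i⟩, ?_, ?_⟩
  · simp only [dimH_iUnion, hdim, ciSup_const]
  · obtain ⟨i⟩ := ‹Nonempty V›
    have hμU : μ i (⋃ j, K j) ≠ 0 :=
      ((pos_iff_ne_zero.2 (hμK i)).trans_le (measure_mono (subset_iUnion K i))).ne'
    exact (hμ i).tendsto_log_coveringNumber_div (Bornology.isBounded_iUnion.2 hK.isBounded) hμU
      (coveringNumber_iUnion_isBigO hK.isBounded hupper)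

theorem stmt18 {d : ℕ} {V E : Type} [Fintype V] [Fintype E] [DecidableEq V]
    (G : MWGraph d V E) (hSC : G.StronglyConnected)
    (K U : V → Set (Pt d)) (hK : G.IsAttractor K) (hU : G.IsOSCWith U)
    (hX : Pairwise fun i j : V => Disjoint (interior (G.X i)) (interior (G.X j)))
    (s0 : ℝ) (hs0 : IsS0 G s0) :
    (∀ i : V,
      dimH (K i) = ENNReal.ofReal s0 ∧
      Tendsto (fun r : ℝ => Real.log (coveringNumber (K i) r : ℝ) / Real.log (1 / r))
        (𝓝[>] (0 : ℝ)) (𝓝 s0) ∧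
      0 < μH[s0] (K i) ∧ μH[s0] (K i) < ⊤) ∧
    dimH (⋃ i : V, K i) = ENNReal.ofReal s0 ∧
    Tendsto (fun r : ℝ => Real.log (coveringNumber (⋃ i : V, K i) r : ℝ) / Real.log (1 / r))
      (𝓝[>] (0 : ℝ)) (𝓝 s0) :=
  stmt18_general G hSC K U hK hU s0 hs0
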